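/- Let h₁, …, h₈ ∈ K, with hᵢ = (bᵢ, wᵢ, vᵢ, Mᵢ), and let λ₁, …, λ₈ ∈ [0,1] with Σᵢ λᵢ = 1. Write (b, w, v, M) := Σᵢ λᵢ hᵢ. Then max_{1 ≤ i ≤ 8} λᵢ √(|vᵢ − v₁|² + (bᵢ − b₁)²) ≥ (1/(14√2)) (2 − (|v|² + b²)). -/

import Mathlib

/-!
Put `pᵢ = (vᵢ, bᵢ) ∈ ℝ³`, so that `|pᵢ|² = 2`, let `p = Σ λᵢ pᵢ`, let `dᵢ = |pᵢ - p₀|`, and let `S`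
be the maximum of the `λᵢ dᵢ`.
From `|p - p₀|² ≥ 0` one gets `2 - |p|² ≤ 4 - 2 ⟨p, p₀⟩ = Σ λᵢ (4 - 2 ⟨pᵢ, p₀⟩) = Σ λᵢ dᵢ²`.
Two points of the sphere of radius `√2` are at distance at most `2√2`, so each `λᵢ dᵢ²` is at most
`2√2 S`; the term `i = 0` vanishes, and the seven others sum to at most `14√2 S`.
-/

open Matrix

noncomputable section

/-- The constraint set `K ⊂ ℝ × ℝ² × ℝ² × 𝕊₀² ≅ ℝ⁷`, a state being flattened as
`h = (b, w₁, w₂, v₁, v₂, M₁₁, M₁₂)` with `M = ![![M₁₁, M₁₂], ![M₁₂, −M₁₁]] ∈ 𝕊₀²`: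
`|b| = 1`, `|v| = 1`, `M = v ⊗ v − (1/2) I₂`, `w = b v`. -/
def K7 : Set (Fin 7 → ℝ) :=
  {h | |h 0| = 1 ∧ (h 3) ^ 2 + (h 4) ^ 2 = 1 ∧
    h 5 = (h 3) ^ 2 - 1 / 2 ∧ h 6 = h 3 * h 4 ∧
    h 1 = h 0 * h 3 ∧ h 2 = h 0 * h 4}

/-- For a convex combination `(b,w,v,M) = Σ λᵢ hᵢ` of eight elements of `K`,
`max_i λᵢ √(|vᵢ − v₁|² + (bᵢ − b₁)²) ≥ (1/(14√2)) (2 − (|v|² + b²))`. -/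
theorem stmt_7 (h : Fin 8 → Fin 7 → ℝ) (hK : ∀ i, h i ∈ K7)
    (lam : Fin 8 → ℝ) (hlam : ∀ i, lam i ∈ Set.Icc (0 : ℝ) 1)
    (hsum : ∑ i, lam i = 1) :
    Finset.univ.sup' Finset.univ_nonempty
        (fun i : Fin 8 => lam i *
          Real.sqrt ((h i 3 - h 0 3) ^ 2 + (h i 4 - h 0 4) ^ 2 + (h i 0 - h 0 0) ^ 2)) ≥
      (1 / (14 * Real.sqrt 2)) *
        (2 - (((∑ i, lam i • h i) 3) ^ 2 + ((∑ i, lam i • h i) 4) ^ 2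
            + ((∑ i, lam i • h i) 0) ^ 2)) := by
  have hb : ∀ i, (h i 0) ^ 2 = 1 := fun i => by rw [← sq_abs, (hK i).1, one_pow]
  have hv : ∀ i, (h i 3) ^ 2 + (h i 4) ^ 2 = 1 := fun i => (hK i).2.1
  have hcoord : ∀ k, (∑ i, lam i • h i) k = ∑ i, lam i * h i k := fun k => by
    simp [Finset.sum_apply]
  simp only [hcoord]
  set D : Fin 8 → ℝ := fun i =>
    (h i 3 - h 0 3) ^ 2 + (h i 4 - h 0 4) ^ 2 + (h i 0 - h 0 0) ^ 2 with hD
  set S := Finset.univ.sup' Finset.univ_nonempty (fun i : Fin 8 => lam i * √(D i)) with hS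
  have hle : ∀ i, lam i * √(D i) ≤ S := fun i =>
    Finset.le_sup' (fun i : Fin 8 => lam i * √(D i)) (Finset.mem_univ i)
  have hterm : ∀ i, lam i * D i ≤ 2 * √2 * S := by
    intro i
    have hD0 : 0 ≤ D i := by simp only [hD]; positivity
    have hD8 : D i ≤ 8 := by
      simp only [hD]
      nlinarith [hb i, hb 0, hv i, hv 0, sq_nonneg (h i 3 + h 0 3),
        sq_nonneg (h i 4 + h 0 4), sq_nonneg (h i 0 + h 0 0)]
    have hsq : √(D i) ≤ 2 * √2 := by
      apply Real.sqrt_le_iff.2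
      refine ⟨by positivity, ?_⟩
      rw [mul_pow, Real.sq_sqrt (by norm_num)]
      linarith
    calc lam i * D i = √(D i) * (lam i * √(D i)) := by
          nth_rewrite 1 [← Real.mul_self_sqrt hD0]
          ring
      _ ≤ 2 * √2 * (lam i * √(D i)) :=
          mul_le_mul_of_nonneg_right hsq (mul_nonneg (hlam i).1 (Real.sqrt_nonneg _))
      _ ≤ 2 * √2 * S := mul_le_mul_of_nonneg_left (hle i) (by positivity)
  have hDsum : ∑ i, lam i * D i ≤ 14 * √2 * S := by
    have h0 : lam 0 * D 0 = 0 := by simp [hD]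
    rw [Fin.sum_univ_succ, h0, zero_add]
    calc ∑ i : Fin 7, lam i.succ * D i.succ ≤ ∑ _i : Fin 7, 2 * √2 * S :=
          Finset.sum_le_sum fun i _ => hterm i.succ
      _ = 14 * √2 * S := by
          simp only [Finset.sum_const, Finset.card_univ, Fintype.card_fin, nsmul_eq_mul]
          push_cast
          ring
  have hexpand : ∑ i, lam i * D i = 4 - 2 * (h 0 3 * ∑ i, lam i * h i 3
      + h 0 4 * ∑ i, lam i * h i 4 + h 0 0 * ∑ i, lam i * h i 0) := by
    have h4 : (4 : ℝ) = ∑ i, 4 * lam i := by rw [← Finset.mul_sum, hsum, mul_one]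
    rw [h4]
    simp only [Finset.mul_sum, ← Finset.sum_add_distrib, ← Finset.sum_sub_distrib]
    refine Finset.sum_congr rfl fun i _ => ?_
    simp only [hD]
    linear_combination lam i * (hb i + hb 0 + hv i + hv 0)
  rw [ge_iff_le, one_div, inv_mul_le_iff₀ (by positivity)]
  nlinarith [hb 0, hv 0, sq_nonneg (h 0 3 - ∑ i, lam i * h i 3),
    sq_nonneg (h 0 4 - ∑ i, lam i * h i 4), sq_nonneg (h 0 0 - ∑ i, lam i * h i 0)]
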